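/- For j = 1, 2, 3, let π_j ∈ ℚ[t] be an irreducible polynomial with π_j(0) ≠ 0, let m_j ≥ 1, set δ_j = π_j^{m_j} and A_j = ℚ[t^{±1}]/(δ_j). Then the quotient vector space (A₁ ⊗_ℚ A₂ ⊗_ℚ A₃)/H is nonzero if and only if there exist complex roots z₁, z₂, z₃ of δ₁, δ₂, δ₃ respectively such that z₁z₂z₃ = 1. -/

import Mathlib

open LaurentPolynomial TensorProduct

set_option synthInstance.maxHeartbeats 1000000
set_option maxHeartbeats 1000000
set_option maxSynthPendingDepth 3
noncomputable section

abbrev LQuot (K : Type) [Field K] (p : LaurentPolynomial K) : Type :=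
  LaurentPolynomial K ⧸ Ideal.span {p}

abbrev Trip (K : Type) [Field K] (p q r : LaurentPolynomial K) : Type :=
  (LQuot K p ⊗[K] LQuot K q) ⊗[K] LQuot K r

def holSub (K : Type) [Field K] (p q r : LaurentPolynomial K) :
    Submodule K (Trip K p q r) :=
  Submodule.span K { x | ∃ (a : LQuot K p) (b : LQuot K q) (c : LQuot K r),
    x = (a ⊗ₜ[K] b) ⊗ₜ[K] c -
      (((T 1 : LaurentPolynomial K) • a) ⊗ₜ[K] ((T 1 : LaurentPolynomial K) • b)) ⊗ₜ[K]
        ((T 1 : LaurentPolynomial K) • c) }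

/-- Multiplication by `1 - τ` lands in the holonomy subspace. -/
theorem mul_mem_holSub (p q r : LaurentPolynomial ℚ) (x : Trip ℚ p q r) :
    x - ((Ideal.Quotient.mk (Ideal.span {p}) (T 1) ⊗ₜ[ℚ] Ideal.Quotient.mk (Ideal.span {q}) (T 1))
      ⊗ₜ[ℚ] Ideal.Quotient.mk (Ideal.span {r}) (T 1) : Trip ℚ p q r) * x ∈ holSub ℚ p q r := by
  induction x using TensorProduct.induction_on with
  | zero => simp
  | add x y hx hy =>
    have := add_mem hx hy
    rwa [sub_add_sub_comm, ← mul_add] at this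
  | tmul y c =>
    induction y using TensorProduct.induction_on with
    | zero => simp
    | add x y hx hy =>
      have := add_mem hx hy
      rwa [sub_add_sub_comm, ← mul_add, ← TensorProduct.add_tmul] at this
    | tmul a b =>
      apply Submodule.subset_span
      refine ⟨a, b, c, ?_⟩
      rw [Algebra.TensorProduct.tmul_mul_tmul, Algebra.TensorProduct.tmul_mul_tmul]
      rfl

/-- The evaluation at a nonzero root. -/
theorem exists_eval (p : Polynomial ℚ) (z : ℂ) (hz : z ≠ 0) (hp : Polynomial.aeval z p = 0) :
    ∃ f : LQuot ℚ (Polynomial.toLaurent p) →ₐ[ℚ] ℂ,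
      f (Ideal.Quotient.mk _ (T 1)) = z := by
  let g : LaurentPolynomial ℚ →+* ℂ := LaurentPolynomial.eval₂ (algebraMap ℚ ℂ) (Units.mk0 z hz)
  have hg : ∀ a ∈ Ideal.span {Polynomial.toLaurent p}, g a = 0 := by
    intro a ha
    obtain ⟨b, rfl⟩ := Ideal.mem_span_singleton'.1 ha
    rw [map_mul]
    have : g (Polynomial.toLaurent p) = 0 := by
      simpa [g, Polynomial.aeval_def] using hp
    rw [this, mul_zero]
  refine ⟨(Ideal.Quotient.lift _ g hg).toRatAlgHom, ?_⟩
  have : Ideal.Quotient.lift _ g hg (Ideal.Quotient.mk _ (T 1)) = z := by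
    rw [Ideal.Quotient.lift_mk]
    simp [g]
  exact this

theorem root_of_hom {F : Type} [Field F] [Algebra ℚ F] (p : Polynomial ℚ)
    (f : LQuot ℚ (Polynomial.toLaurent p) →ₐ[ℚ] F) :
    Polynomial.aeval (f (Ideal.Quotient.mk _ (T 1))) p = 0 := by
  have h1 : Polynomial.aeval (T 1 : LaurentPolynomial ℚ) p = Polynomial.toLaurent p := by
    have : Polynomial.aeval (T 1 : LaurentPolynomial ℚ) = Polynomial.toLaurentAlg := by
      ext; simp
    rw [this]; rfl
  rw [Polynomial.aeval_algHom_apply]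
  have h2 : Polynomial.aeval (Ideal.Quotient.mk (Ideal.span {Polynomial.toLaurent p}) (T 1)) p
      = Ideal.Quotient.mkₐ ℚ (Ideal.span {Polynomial.toLaurent p})
        (Polynomial.aeval (T 1 : LaurentPolynomial ℚ) p) :=
    Polynomial.aeval_algHom_apply (Ideal.Quotient.mkₐ ℚ (Ideal.span {Polynomial.toLaurent p}))
      (T 1) p
  rw [h2, h1]
  have h3 : Ideal.Quotient.mkₐ ℚ (Ideal.span {Polynomial.toLaurent p}) (Polynomial.toLaurent p) = 0 :=
    Ideal.Quotient.eq_zero_iff_mem.2 (Ideal.mem_span_singleton_self _)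
  rw [h3, map_zero]

theorem transfer_aux {K F C : Type} [Field K] [Field F] [Field C] [Algebra K F] [Algebra K C]
    [IsAlgClosed C] (p q r : Polynomial K) (hp : p ≠ 0) (hq : q ≠ 0) (hr : r ≠ 0) (x₁ x₂ x₃ : F)
    (r₁ : Polynomial.aeval x₁ p = 0) (r₂ : Polynomial.aeval x₂ q = 0)
    (r₃ : Polynomial.aeval x₃ r = 0) (hprod : x₁ * x₂ * x₃ = 1) :
    ∃ z₁ z₂ z₃ : C, Polynomial.aeval z₁ p = 0 ∧ Polynomial.aeval z₂ q = 0 ∧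
        Polynomial.aeval z₃ r = 0 ∧ z₁ * z₂ * z₃ = 1 := by
  let g : algebraicClosure K F →ₐ[K] C := IsAlgClosed.lift
  let y₁ : algebraicClosure K F := ⟨x₁, mem_algebraicClosure_iff.2 ⟨p, hp, r₁⟩⟩
  let y₂ : algebraicClosure K F := ⟨x₂, mem_algebraicClosure_iff.2 ⟨q, hq, r₂⟩⟩
  let y₃ : algebraicClosure K F := ⟨x₃, mem_algebraicClosure_iff.2 ⟨r, hr, r₃⟩⟩
  have tr : ∀ (s : Polynomial K) (y : algebraicClosure K F), Polynomial.aeval (y : F) s = 0 →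
      Polynomial.aeval (g y) s = 0 := by
    intro s y h
    rw [Polynomial.aeval_algHom_apply]
    have : Polynomial.aeval y s = 0 := by
      apply Subtype.ext
      rw [IntermediateField.coe_zero, ← h]
      exact (Polynomial.aeval_algHom_apply (algebraicClosure K F).val y s).symm
    rw [this, map_zero]
  refine ⟨g y₁, g y₂, g y₃, tr p y₁ r₁, tr q y₂ r₂, tr r y₃ r₃, ?_⟩
  rw [← map_mul, ← map_mul]
  have : y₁ * y₂ * y₃ = 1 := Subtype.ext hprod
  rw [this, map_one]

theorem field_aux {F : Type} [Field F] [Algebra ℚ F] (p q r : Polynomial ℚ)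
    (hp : p ≠ 0) (hq : q ≠ 0) (hr : r ≠ 0)
    (f : Trip ℚ (Polynomial.toLaurent p) (Polynomial.toLaurent q) (Polynomial.toLaurent r) →ₐ[ℚ] F)
    (hf : f ((Ideal.Quotient.mk _ (T 1) ⊗ₜ[ℚ] Ideal.Quotient.mk _ (T 1)) ⊗ₜ[ℚ]
      Ideal.Quotient.mk _ (T 1)) = 1) :
    ∃ z₁ z₂ z₃ : ℂ, Polynomial.aeval z₁ p = 0 ∧ Polynomial.aeval z₂ q = 0 ∧
        Polynomial.aeval z₃ r = 0 ∧ z₁ * z₂ * z₃ = 1 := by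
  let i₁ := f.comp (Algebra.TensorProduct.includeLeft.comp Algebra.TensorProduct.includeLeft)
  let i₂ := f.comp (Algebra.TensorProduct.includeLeft.comp Algebra.TensorProduct.includeRight)
  let i₃ := f.comp Algebra.TensorProduct.includeRight
  have r₁ := root_of_hom p i₁
  have r₂ := root_of_hom q i₂
  have r₃ := root_of_hom r i₃
  have hprod : i₁ (Ideal.Quotient.mk _ (T 1)) * i₂ (Ideal.Quotient.mk _ (T 1)) *
      i₃ (Ideal.Quotient.mk _ (T 1)) = 1 := by
    rw [← hf]
    simp only [i₁, i₂, i₃, AlgHom.comp_apply, ← map_mul]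
    congr 1
    simp [Algebra.TensorProduct.includeLeft_apply, Algebra.TensorProduct.tmul_mul_tmul]
  generalize i₁ (Ideal.Quotient.mk _ (T 1)) = x₁ at r₁ hprod
  generalize i₂ (Ideal.Quotient.mk _ (T 1)) = x₂ at r₂ hprod
  generalize i₃ (Ideal.Quotient.mk _ (T 1)) = x₃ at r₃ hprod
  exact transfer_aux p q r hp hq hr x₁ x₂ x₃ r₁ r₂ r₃ hprod

theorem main_aux (p q r : Polynomial ℚ) (hp : p ≠ 0) (hq : q ≠ 0) (hr : r ≠ 0) :
    Nontrivial (Trip ℚ (Polynomial.toLaurent p) (Polynomial.toLaurent q) (Polynomial.toLaurent r) ⧸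
        holSub ℚ (Polynomial.toLaurent p) (Polynomial.toLaurent q) (Polynomial.toLaurent r)) ↔
      ∃ z₁ z₂ z₃ : ℂ, Polynomial.aeval z₁ p = 0 ∧ Polynomial.aeval z₂ q = 0 ∧
        Polynomial.aeval z₃ r = 0 ∧ z₁ * z₂ * z₃ = 1 := by
  rw [Submodule.Quotient.nontrivial_iff]
  constructor
  · intro hne
    let τ : Trip ℚ (Polynomial.toLaurent p) (Polynomial.toLaurent q) (Polynomial.toLaurent r) :=
      (Ideal.Quotient.mk _ (T 1) ⊗ₜ[ℚ] Ideal.Quotient.mk _ (T 1)) ⊗ₜ[ℚ] Ideal.Quotient.mk _ (T 1)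
    have hI : Ideal.span {1 - τ} ≠ ⊤ := by
      intro h
      apply hne
      rw [eq_top_iff]
      intro x _
      have hx : x ∈ Ideal.span {1 - τ} := h ▸ Submodule.mem_top
      obtain ⟨y, rfl⟩ := Ideal.mem_span_singleton'.1 hx
      have := mul_mem_holSub _ _ _ y
      have e : y * (1 - τ) = y - τ * y := by ring
      rw [e]
      exact this
    obtain ⟨M, hM, hIM⟩ := Ideal.exists_le_maximal _ hI
    letI : Field (Trip ℚ (Polynomial.toLaurent p) (Polynomial.toLaurent q)
      (Polynomial.toLaurent r) ⧸ M) := Ideal.Quotient.field M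
    refine field_aux p q r hp hq hr (Ideal.Quotient.mkₐ ℚ M) ?_
    have : Ideal.Quotient.mk M (1 - τ) = 0 :=
      Ideal.Quotient.eq_zero_iff_mem.2 (hIM (Ideal.mem_span_singleton_self _))
    rw [map_sub, map_one, sub_eq_zero] at this
    exact this.symm
  · rintro ⟨z₁, z₂, z₃, h₁, h₂, h₃, h⟩
    have hz₁ : z₁ ≠ 0 := by rintro rfl; simp at h
    have hz₂ : z₂ ≠ 0 := by rintro rfl; simp at h
    have hz₃ : z₃ ≠ 0 := by rintro rfl; simp at h
    obtain ⟨f₁, hf₁⟩ := exists_eval p z₁ hz₁ h₁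
    obtain ⟨f₂, hf₂⟩ := exists_eval q z₂ hz₂ h₂
    obtain ⟨f₃, hf₃⟩ := exists_eval r z₃ hz₃ h₃
    let φ := Algebra.TensorProduct.lift (Algebra.TensorProduct.lift f₁ f₂ (fun _ _ => Commute.all _ _))
      f₃ (fun _ _ => Commute.all _ _)
    have hφ : ∀ a b c, φ ((a ⊗ₜ b) ⊗ₜ c) = f₁ a * f₂ b * f₃ c := by
      intro a b c
      simp [φ]
    have hle : holSub ℚ (Polynomial.toLaurent p) (Polynomial.toLaurent q) (Polynomial.toLaurent r)
        ≤ LinearMap.ker φ.toLinearMap := by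
      refine Submodule.span_le.2 ?_
      rintro _ ⟨a, b, c, rfl⟩
      have e₁ : f₁ ((T 1 : LaurentPolynomial ℚ) • a) = z₁ * f₁ a := by
        rw [← hf₁, ← map_mul]; rfl
      have e₂ : f₂ ((T 1 : LaurentPolynomial ℚ) • b) = z₂ * f₂ b := by
        rw [← hf₂, ← map_mul]; rfl
      have e₃ : f₃ ((T 1 : LaurentPolynomial ℚ) • c) = z₃ * f₃ c := by
        rw [← hf₃, ← map_mul]; rfl
      rw [SetLike.mem_coe, LinearMap.mem_ker, AlgHom.toLinearMap_apply]
      rw [map_sub, hφ, hφ, e₁, e₂, e₃]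
      linear_combination (-(f₁ a * f₂ b * f₃ c)) * h
    intro htop
    rw [htop] at hle
    have h1 : φ 1 = 0 := hle (Submodule.mem_top (x := 1))
    rw [map_one] at h1
    exact one_ne_zero h1

theorem stmt1 (π₁ π₂ π₃ : Polynomial ℚ)
    (hirr₁ : Irreducible π₁) (hirr₂ : Irreducible π₂) (hirr₃ : Irreducible π₃)
    (h0₁ : π₁.eval 0 ≠ 0) (h0₂ : π₂.eval 0 ≠ 0) (h0₃ : π₃.eval 0 ≠ 0)
    (m₁ m₂ m₃ : ℕ) (hm₁ : 1 ≤ m₁) (hm₂ : 1 ≤ m₂) (hm₃ : 1 ≤ m₃) :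
    Nontrivial (Trip ℚ (Polynomial.toLaurent (π₁ ^ m₁)) (Polynomial.toLaurent (π₂ ^ m₂))
          (Polynomial.toLaurent (π₃ ^ m₃)) ⧸
        holSub ℚ (Polynomial.toLaurent (π₁ ^ m₁)) (Polynomial.toLaurent (π₂ ^ m₂))
          (Polynomial.toLaurent (π₃ ^ m₃))) ↔
      ∃ z₁ z₂ z₃ : ℂ, Polynomial.aeval z₁ (π₁ ^ m₁) = 0 ∧ Polynomial.aeval z₂ (π₂ ^ m₂) = 0 ∧
        Polynomial.aeval z₃ (π₃ ^ m₃) = 0 ∧ z₁ * z₂ * z₃ = 1 := by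
  exact main_aux _ _ _ (pow_ne_zero _ hirr₁.ne_zero) (pow_ne_zero _ hirr₂.ne_zero)
    (pow_ne_zero _ hirr₃.ne_zero)
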